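/- arXiv:2406.13660 — 5 statements merged into one kernel-verified Lean document; each statement's English description precedes it below -/
import Mathlib

section
/- Let X be a nonempty finite type, let p be a probability mass function on X with p(x) > 0 for every x, and let S ⊆ X be a set of negative examples with Z := Σ_{x ∉ S} p(x) > 0. Define q(x) := 𝟙[x ∉ S] · p(x) / Z. Then q is a probability mass function vanishing on S, and for every probability mass function r on X with r(x) = 0 for all x ∈ S, one has KL(r‖p) ≥ KL(q‖p). In other words, q attains the minimum of the reverse KL divergence to p over all distributions supported outside S. -/
open scoped Classical

/-- A probability mass function on a finite type: nonnegative and sums to 1. -/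
def IsPMF {X : Type*} [Fintype X] (p : X → ℝ) : Prop :=
  (∀ x, 0 ≤ p x) ∧ ∑ x, p x = 1

/-- Kullback–Leibler divergence with the convention `0 · log 0 = 0`
(`Real.log 0 = 0` in Mathlib, and terms with `q x = 0` vanish). -/
noncomputable def KL {X : Type*} [Fintype X] (q p : X → ℝ) : ℝ :=
  ∑ x, q x * Real.log (q x / p x)

/-!
Let `q` be the update of `p` and `Z` the mass of `p` outside `S`. Since `p = Z * q` outside `S`,
every pmf `r` supported there satisfies `KL r p = KL r q - log Z`. Taking `r = q` gives
`KL q p = -log Z`, hence the Pythagorean identity `KL r p = KL r q + KL q p`, and the claim is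
Gibbs' inequality `0 ≤ KL r q`.
-/

lemma sub_le_mul_log_div {a b : ℝ} (ha : 0 ≤ a) (hb : 0 ≤ b) (hab : b = 0 → a = 0) :
    a - b ≤ a * Real.log (a / b) := by
  rcases hb.eq_or_lt with rfl | hb
  · simp [hab rfl]
  · have h : 0 ≤ b * InformationTheory.klFun (a / b) :=
      mul_nonneg hb.le (InformationTheory.klFun_nonneg (div_nonneg ha hb.le))
    have h_eq : b * InformationTheory.klFun (a / b) = a * Real.log (a / b) + b - a := by
      rw [InformationTheory.klFun]
      field_simp
    linarith

section KL

variable {X : Type*} [Fintype X] {p q r : X → ℝ}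

lemma KL_self (p : X → ℝ) : KL p p = 0 :=
  Finset.sum_eq_zero fun x _ => by rcases eq_or_ne (p x) 0 with h | h <;> simp [h]

lemma sum_sub_sum_le_KL (hr : ∀ x, 0 ≤ r x) (hq : ∀ x, 0 ≤ q x) (hrq : ∀ x, q x = 0 → r x = 0) :
    ∑ x, r x - ∑ x, q x ≤ KL r q := by
  rw [← Finset.sum_sub_distrib]
  exact Finset.sum_le_sum fun x _ => sub_le_mul_log_div (hr x) (hq x) (hrq x)

lemma IsPMF.KL_nonneg (hr : IsPMF r) (hq : IsPMF q) (hrq : ∀ x, q x = 0 → r x = 0) :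
    0 ≤ KL r q := by
  simpa [hr.2, hq.2] using sum_sub_sum_le_KL hr.1 hq.1 hrq

lemma KL_eq_KL_sub_sum_mul_log {c : ℝ} (hc : c ≠ 0) (hrq : ∀ x, q x = 0 → r x = 0)
    (hpq : ∀ x, r x ≠ 0 → p x = c * q x) :
    KL r p = KL r q - (∑ x, r x) * Real.log c := by
  rw [KL, KL, Finset.sum_mul, ← Finset.sum_sub_distrib]
  refine Finset.sum_congr rfl fun x _ => ?_
  rcases eq_or_ne (r x) 0 with hrx | hrx
  · simp [hrx]
  · have hqx : q x ≠ 0 := mt (hrq x) hrx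
    rw [hpq x hrx, mul_comm c, ← div_div, Real.log_div (div_ne_zero hrx hqx) hc, mul_sub]

end KL

section targetedUpdate

variable {X : Type*} [Fintype X] {p r : X → ℝ} {S : Set X}

/-- The minimal targeted update of the weights `p` with respect to the negative set `S`: the
weights on `S` are set to zero and the others are divided by their sum. The weights `p` need not
sum to `1`, and if those outside `S` sum to `0` then the result is `0`. -/
noncomputable def targetedUpdate (p : X → ℝ) (S : Set X) (x : X) : ℝ :=
  if x ∈ S then 0 else p x / ∑ y with y ∉ S, p y

lemma targetedUpdate_of_mem {x : X} (hx : x ∈ S) : targetedUpdate p S x = 0 :=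
  if_pos hx

lemma targetedUpdate_of_notMem {x : X} (hx : x ∉ S) :
    targetedUpdate p S x = p x / ∑ y with y ∉ S, p y :=
  if_neg hx

lemma targetedUpdate_eq_zero_iff (hZ : ∑ y with y ∉ S, p y ≠ 0) {x : X} :
    targetedUpdate p S x = 0 ↔ x ∈ S ∨ p x = 0 := by
  by_cases hx : x ∈ S
  · simp [targetedUpdate_of_mem, hx]
  · simp [targetedUpdate_of_notMem, hx, hZ]

lemma sum_targetedUpdate (hZ : ∑ y with y ∉ S, p y ≠ 0) : ∑ x, targetedUpdate p S x = 1 := by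
  calc ∑ x, targetedUpdate p S x = ∑ x with x ∉ S, p x / ∑ y with y ∉ S, p y := by
        simp only [targetedUpdate, Finset.sum_filter, ite_not]
    _ = 1 := by rw [← Finset.sum_div, div_self hZ]

lemma isPMF_targetedUpdate (hp : ∀ x, 0 ≤ p x) (hZ : ∑ y with y ∉ S, p y ≠ 0) :
    IsPMF (targetedUpdate p S) := by
  refine ⟨fun x => ?_, sum_targetedUpdate hZ⟩
  rw [targetedUpdate]
  split_ifs
  exacts [le_rfl, div_nonneg (hp x) (Finset.sum_nonneg fun y _ => hp y)]

lemma KL_eq_KL_targetedUpdate_sub_sum_mul_log (hZ : ∑ y with y ∉ S, p y ≠ 0)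
    (hr : ∀ x, targetedUpdate p S x = 0 → r x = 0) :
    KL r p = KL r (targetedUpdate p S) - (∑ x, r x) * Real.log (∑ y with y ∉ S, p y) := by
  refine KL_eq_KL_sub_sum_mul_log hZ hr fun x hrx => ?_
  have hx : x ∉ S := fun hx => hrx (hr x (targetedUpdate_of_mem hx))
  rw [targetedUpdate_of_notMem hx, mul_div_cancel₀ _ hZ]

lemma KL_targetedUpdate (hZ : ∑ y with y ∉ S, p y ≠ 0) :
    KL (targetedUpdate p S) p = -Real.log (∑ y with y ∉ S, p y) := by
  rw [KL_eq_KL_targetedUpdate_sub_sum_mul_log hZ fun _ => id, KL_self, sum_targetedUpdate hZ,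
    one_mul, zero_sub]

lemma KL_eq_KL_targetedUpdate_add (hZ : ∑ y with y ∉ S, p y ≠ 0) (hr_sum : ∑ x, r x = 1)
    (hr : ∀ x, targetedUpdate p S x = 0 → r x = 0) :
    KL r p = KL r (targetedUpdate p S) + KL (targetedUpdate p S) p := by
  rw [KL_eq_KL_targetedUpdate_sub_sum_mul_log hZ hr, KL_targetedUpdate hZ, hr_sum, one_mul,
    sub_eq_add_neg]

theorem minimal_targeted_update_minimizes_KL_general (hp : ∀ x, 0 ≤ p x)
    (hZ : ∑ y with y ∉ S, p y ≠ 0) :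
    (IsPMF (targetedUpdate p S) ∧ ∀ x ∈ S, targetedUpdate p S x = 0) ∧
      ∀ r : X → ℝ, IsPMF r → (∀ x ∈ S, r x = 0) → (∀ x, p x = 0 → r x = 0) →
        KL (targetedUpdate p S) p ≤ KL r p := by
  have hq : IsPMF (targetedUpdate p S) := isPMF_targetedUpdate hp hZ
  refine ⟨⟨hq, fun _ => targetedUpdate_of_mem⟩, fun r hr hrS hrp => ?_⟩
  have hrq : ∀ x, targetedUpdate p S x = 0 → r x = 0 := fun x hx =>
    ((targetedUpdate_eq_zero_iff hZ).1 hx).elim (hrS x) (hrp x)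
  rw [KL_eq_KL_targetedUpdate_add hZ hr.2 hrq]
  exact le_add_of_nonneg_left (hr.KL_nonneg hq hrq)

end targetedUpdate

/-- The minimal targeted update `q` of `p` with respect to the negative set `S`
(i.e. `p` with the mass of `S` zeroed out and renormalized) is a pmf vanishing on `S`
and minimizes the reverse KL divergence to `p` among all pmfs vanishing on `S`. -/
theorem minimal_targeted_update_minimizes_KL
    {X : Type*} [Fintype X] [Nonempty X]
    (p : X → ℝ) (hpmf : IsPMF p) (hp : ∀ x, 0 < p x)
    (S : Set X)
    (Z : ℝ) (hZ : Z = ∑ x ∈ Finset.univ.filter (fun x => x ∉ S), p x) (hZpos : 0 < Z)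
    (q : X → ℝ) (hq : ∀ x, q x = if x ∈ S then 0 else p x / Z) :
    (IsPMF q ∧ ∀ x ∈ S, q x = 0) ∧
      ∀ r : X → ℝ, IsPMF r → (∀ x ∈ S, r x = 0) → KL q p ≤ KL r p := by
  subst hZ
  obtain rfl : q = targetedUpdate p S := funext hq
  obtain ⟨hq_pmf, hq_min⟩ := minimal_targeted_update_minimizes_KL_general hpmf.1 hZpos.ne'
  exact ⟨hq_pmf, fun r hr hrS => hq_min r hr hrS fun x hx => absurd hx (hp x).ne'⟩
end

section
/- Let X be a finite type, let p_neg be a probability mass function on X with support S := {x : p_neg(x) > 0}, and suppose there exists x₀ ∈ X with x₀ ∉ S. Then the negative likelihood objective is unbounded below over strictly positive pmfs: for every M ∈ ℝ there exists a probability mass function q on X with q(x) > 0 for all x ∈ X such that Σ_{x} p_neg(x) · log q(x) < M. -/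
/-!
Start from positive masses `m` and lower the mass of a point `a` with `0 < w a` to `t`. After
normalization by the total mass `Z t`, the objective is, up to a constant,
`w a * log t - (∑ x, w x) * log (Z t)`. As `t → 0⁺` the first term tends to `-∞`, while `Z t` tends
to the mass of the remaining points, which is positive as soon as there is another point.
-/

open Filter Topology

section NormalizeMass

variable {X : Type*} [Fintype X]

/-- The normalization of an unnormalized mass function `m` on a finite type, which turns positive
masses into a pmf; it is identically `0` if the total mass is `0`. -/
noncomputable def normalizeMass (m : X → ℝ) (x : X) : ℝ :=
  m x / ∑ y, m y

theorem normalizeMass_pos {m : X → ℝ} (hm : ∀ x, 0 < m x) (x : X) : 0 < normalizeMass m x :=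
  div_pos (hm x) (Finset.sum_pos (fun y _ => hm y) ⟨x, Finset.mem_univ x⟩)

theorem sum_normalizeMass {m : X → ℝ} (hm : ∑ x, m x ≠ 0) : ∑ x, normalizeMass m x = 1 := by
  simp only [normalizeMass, ← Finset.sum_div, div_self hm]

theorem sum_mul_log_normalizeMass (w : X → ℝ) {m : X → ℝ} (hm : ∀ x, m x ≠ 0)
    (hsum : ∑ x, m x ≠ 0) :
    ∑ x, w x * Real.log (normalizeMass m x) =
      ∑ x, w x * Real.log (m x) - (∑ x, w x) * Real.log (∑ x, m x) := by
  simp only [normalizeMass, Real.log_div (hm _) hsum, mul_sub, Finset.sum_sub_distrib,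
    Finset.sum_mul]

end NormalizeMass

section Update

variable {X : Type*} [DecidableEq X] {m : X → ℝ}

theorem update_pos (hm : ∀ x, 0 < m x) (a : X) {t : ℝ} (ht : 0 < t) :
    ∀ x, 0 < Function.update m a t x :=
  (Function.forall_update_iff m fun _ y => 0 < y).2 ⟨ht, fun x _ => hm x⟩

variable [Fintype X]

theorem sum_update_pos [Nontrivial X] (hm : ∀ x, 0 < m x) (a : X) {t : ℝ} (ht : 0 ≤ t) :
    0 < ∑ x, Function.update m a t x := by
  obtain ⟨b, hb⟩ := exists_ne a
  rw [Finset.sum_update_of_mem (Finset.mem_univ a)]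
  exact add_pos_of_nonneg_of_pos ht (Finset.sum_pos (fun x _ => hm x) ⟨b, by simp [hb]⟩)

theorem sum_mul_log_update (w m : X → ℝ) (a : X) (t : ℝ) :
    ∑ x, w x * Real.log (Function.update m a t x) =
      w a * Real.log t + ∑ x ∈ {a}ᶜ, w x * Real.log (m x) := by
  rw [Fintype.sum_eq_add_sum_compl a, Function.update_self]
  congr 1
  refine Finset.sum_congr rfl fun x hx => ?_
  rw [Function.update_of_ne (by simpa using hx)]

theorem tendsto_sum_mul_log_normalizeMass_update [Nontrivial X] {w : X → ℝ} {a : X}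
    (ha : 0 < w a) (hm : ∀ x, 0 < m x) :
    Tendsto (fun t => ∑ x, w x * Real.log (normalizeMass (Function.update m a t) x))
      (𝓝[>] 0) atBot := by
  have hunnormalized :
      Tendsto (fun t => ∑ x, w x * Real.log (Function.update m a t x)) (𝓝[>] 0) atBot := by
    simp only [sum_mul_log_update]
    exact tendsto_atBot_add_const_right _ _ (Real.tendsto_log_nhdsGT_zero.const_mul_atBot ha)
  have htotal : Continuous fun t : ℝ => ∑ x, Function.update m a t x := by
    fun_prop
  have hlogTotal : Tendsto (fun t => Real.log (∑ x, Function.update m a t x))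
      (𝓝[>] 0) (𝓝 (Real.log (∑ x, Function.update m a 0 x))) :=
    ((htotal.tendsto 0).log (sum_update_pos hm a le_rfl).ne').mono_left nhdsWithin_le_nhds
  refine (hunnormalized.atBot_add (hlogTotal.const_mul (∑ x, w x)).neg).congr' ?_
  filter_upwards [self_mem_nhdsWithin] with t (ht : 0 < t)
  rw [sum_mul_log_normalizeMass w (fun x => (update_pos hm a ht x).ne')
    (sum_update_pos hm a ht.le).ne', sub_eq_add_neg]

end Update

section IsPMF

variable {X : Type*} [Fintype X] {p : X → ℝ}

theorem IsPMF.exists_pos (hp : IsPMF p) : ∃ x, 0 < p x := by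
  by_contra! hnonpos
  exact (Finset.sum_nonpos fun x _ => hnonpos x).not_gt (hp.2 ▸ zero_lt_one)

theorem IsPMF.nontrivial_of_exists_not_pos (hp : IsPMF p) (hx₀ : ∃ x₀, ¬0 < p x₀) :
    Nontrivial X := by
  obtain ⟨a, ha⟩ := hp.exists_pos
  obtain ⟨x₀, hx₀⟩ := hx₀
  exact nontrivial_of_ne a x₀ fun h => hx₀ (h ▸ ha)

end IsPMF

theorem negative_likelihood_unbounded_below_general {X : Type*} [Fintype X] [Nontrivial X]
    (w : X → ℝ) (hw : ∃ a, 0 < w a) :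
    ∀ M : ℝ, ∃ q : X → ℝ,
      (∀ x, 0 < q x) ∧ (∑ x, q x = 1) ∧ ∑ x, w x * Real.log (q x) < M := by
  classical
  intro M
  obtain ⟨a, ha⟩ := hw
  have hone : ∀ x, 0 < (1 : X → ℝ) x := fun _ => zero_lt_one
  obtain ⟨t, hlt, ht : 0 < t⟩ :=
    (((tendsto_sum_mul_log_normalizeMass_update ha hone).eventually_lt_atBot M).and
      self_mem_nhdsWithin).exists
  exact ⟨normalizeMass (Function.update 1 a t), normalizeMass_pos (update_pos hone a ht),
    sum_normalizeMass (sum_update_pos hone a ht.le).ne', hlt⟩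

/-- The negative likelihood objective is unbounded below over strictly positive pmfs:
if some `x₀` lies outside the support `S = {x | 0 < p_neg x}`, then for every `M` there is a
strictly positive pmf `q` with `Σ_x p_neg(x) · log q(x) < M`. -/
theorem negative_likelihood_unbounded_below
    {X : Type*} [Fintype X]
    (pneg : X → ℝ) (hpneg : IsPMF pneg)
    (hx₀ : ∃ x₀ : X, x₀ ∉ {x | 0 < pneg x}) :
    ∀ M : ℝ, ∃ q : X → ℝ,
      (∀ x, 0 < q x) ∧ (∑ x, q x = 1) ∧ ∑ x, pneg x * Real.log (q x) < M := by
  have : Nontrivial X := hpneg.nontrivial_of_exists_not_pos hx₀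
  exact negative_likelihood_unbounded_below_general pneg hpneg.exists_pos
end

section
/- Let X be a nonempty finite type, let p be a probability mass function on X with p(x) > 0 for every x, let r : X → ℝ be a reward function, and let β > 0. Define Z := Σ_x p(x)·exp(r(x)/β) and p_new(x) := p(x)·exp(r(x)/β)/Z. Then for every probability mass function q on X, the KL-regularized expected reward satisfies Σ_x q(x)·r(x) − β·KL(q‖p) = β·log Z − β·KL(q‖p_new). -/
section

variable {X : Type*} [Fintype X] {p q : X → ℝ}

lemma KL_mul_right {w : X → ℝ} (hp : ∀ x, q x ≠ 0 → p x ≠ 0) (hw : ∀ x, q x ≠ 0 → w x ≠ 0) :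
    KL q (fun x => p x * w x) = KL q p - ∑ x, q x * Real.log (w x) := by
  simp only [KL, ← Finset.sum_sub_distrib]
  refine Finset.sum_congr rfl fun x _ => ?_
  rcases eq_or_ne (q x) 0 with hqx | hqx
  · simp [hqx]
  · rw [← div_div, Real.log_div (div_ne_zero hqx (hp x hqx)) (hw x hqx), mul_sub]

lemma KL_mul_exp_div (hp : ∀ x, q x ≠ 0 → p x ≠ 0) (f : X → ℝ) {Z : ℝ} (hZ : Z ≠ 0) :
    KL q (fun x => p x * Real.exp (f x) / Z) =
      KL q p - ∑ x, q x * f x + (∑ x, q x) * Real.log Z := by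
  have hlog : ∀ x, Real.log (Real.exp (f x) / Z) = f x - Real.log Z := fun x => by
    rw [Real.log_div (Real.exp_ne_zero _) hZ, Real.log_exp]
  simp only [mul_div_assoc]
  rw [KL_mul_right hp fun x _ => div_ne_zero (Real.exp_ne_zero _) hZ]
  simp only [hlog, mul_sub, Finset.sum_sub_distrib, ← Finset.sum_mul]
  ring

lemma sum_mul_exp_pos (hp : ∀ x, 0 ≤ p x) (hp_ne : ∃ x, p x ≠ 0) (f : X → ℝ) :
    0 < ∑ x, p x * Real.exp (f x) := by
  obtain ⟨x, hx⟩ := hp_ne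
  exact Finset.sum_pos' (fun y _ => mul_nonneg (hp y) (Real.exp_pos _).le)
    ⟨x, Finset.mem_univ x, mul_pos ((hp x).lt_of_ne' hx) (Real.exp_pos _)⟩

lemma IsPMF.exists_ne_zero (hq : IsPMF q) : ∃ x, q x ≠ 0 := by
  obtain ⟨x, -, hx⟩ := Finset.exists_ne_zero_of_sum_ne_zero (hq.2.trans_ne one_ne_zero)
  exact ⟨x, hx⟩

theorem kl_regularized_reward_identity_general
    (hp : ∀ x, 0 ≤ p x) (hq : IsPMF q) (hqp : ∀ x, q x ≠ 0 → p x ≠ 0)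
    (r : X → ℝ) {β : ℝ} (hβ : β ≠ 0)
    {Z : ℝ} (hZ : Z = ∑ x, p x * Real.exp (r x / β))
    {pnew : X → ℝ} (hpnew : ∀ x, pnew x = p x * Real.exp (r x / β) / Z) :
    ∑ x, q x * r x - β * KL q p = β * Real.log Z - β * KL q pnew := by
  have hZ_pos : 0 < Z := hZ ▸ sum_mul_exp_pos hp (hq.exists_ne_zero.imp hqp) _
  have hKL : KL q pnew = KL q p - (∑ x, q x * r x) / β + Real.log Z := by
    rw [funext hpnew, KL_mul_exp_div hqp _ hZ_pos.ne', hq.2, one_mul]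
    simp only [← mul_div_assoc, ← Finset.sum_div]
  rw [hKL]
  field_simp
  ring

end

/-- KL-regularized reward identity: with `p_new ∝ p · exp(r/β)`, for every pmf `q` one has
`Σ_x q(x)·r(x) − β·KL(q‖p) = β·log Z − β·KL(q‖p_new)`. -/
theorem kl_regularized_reward_identity
    {X : Type*} [Fintype X] [Nonempty X]
    (p : X → ℝ) (hpmf : IsPMF p) (hp : ∀ x, 0 < p x)
    (r : X → ℝ) (β : ℝ) (hβ : 0 < β)
    (Z : ℝ) (hZ : Z = ∑ x, p x * Real.exp (r x / β))
    (pnew : X → ℝ) (hpnew : ∀ x, pnew x = p x * Real.exp (r x / β) / Z) :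
    ∀ q : X → ℝ, IsPMF q →
      ∑ x, q x * r x - β * KL q p = β * Real.log Z - β * KL q pnew :=
  fun _ hq => kl_regularized_reward_identity_general hpmf.1 hq (fun x _ => (hp x).ne') r hβ.ne'
    hZ hpnew
end

section
/- Let X be a nonempty finite type, let p be a probability mass function on X with p(x) > 0 for every x, let r : X → ℝ be a reward function, and let β > 0. Define Z := Σ_x p(x)·exp(r(x)/β) and p_new(x) := p(x)·exp(r(x)/β)/Z. Then p_new is the unique maximizer over probability mass functions q on X of the objective Σ_x q(x)·r(x) − β·KL(q‖p): for every pmf q one has Σ_x q(x)·r(x) − β·KL(q‖p) ≤ Σ_x p_new(x)·r(x) − β·KL(p_new‖p), with equality if and only if q = p_new. -/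
/-!
The Donsker–Varadhan identity: inserting `p_new = p * exp (r / β) / Z` into `KL q p_new` and
expanding the logarithm turns the objective into `β * (log Z - KL q p_new)`, whose first term does
not depend on `q`. Gibbs' inequality, with its equality case, then concludes.
-/

section

open InformationTheory Finset

variable {X : Type*} [Fintype X] {p q : X → ℝ}

-- Where `p x = 0 < q x`, division by zero makes the summand of `KL q p` equal to `0`, not `∞`.
theorem sum_mul_klFun_div (hqp : ∀ x, p x = 0 → q x = 0) :
    ∑ x, p x * klFun (q x / p x) = KL q p + ∑ x, p x - ∑ x, q x := by
  rw [KL, ← sum_add_distrib, ← sum_sub_distrib]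
  refine sum_congr rfl fun x _ => ?_
  rcases eq_or_ne (p x) 0 with hpx | hpx
  · simp [hpx, hqp x hpx]
  · rw [klFun_apply]
    field_simp

theorem mul_klFun_div_nonneg {a b : ℝ} (ha : 0 ≤ a) (hb : 0 ≤ b) : 0 ≤ a * klFun (b / a) :=
  mul_nonneg ha (klFun_nonneg (div_nonneg hb ha))

theorem KL_nonneg (hp : ∀ x, 0 ≤ p x) (hq : ∀ x, 0 ≤ q x) (hqp : ∀ x, p x = 0 → q x = 0)
    (hsum : ∑ x, p x ≤ ∑ x, q x) : 0 ≤ KL q p := by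
  have hnonneg : 0 ≤ ∑ x, p x * klFun (q x / p x) :=
    sum_nonneg fun x _ => mul_klFun_div_nonneg (hp x) (hq x)
  linarith [sum_mul_klFun_div hqp]

theorem KL_eq_zero_iff (hp : ∀ x, 0 ≤ p x) (hq : ∀ x, 0 ≤ q x) (hqp : ∀ x, p x = 0 → q x = 0)
    (hsum : ∑ x, p x = ∑ x, q x) : KL q p = 0 ↔ q = p := by
  have hKL : KL q p = ∑ x, p x * klFun (q x / p x) := by linarith [sum_mul_klFun_div hqp]
  rw [hKL, sum_eq_zero_iff_of_nonneg fun x _ => mul_klFun_div_nonneg (hp x) (hq x), funext_iff]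
  simp only [mem_univ, true_imp_iff]
  refine forall_congr' fun x => ?_
  rcases eq_or_ne (p x) 0 with hpx | hpx
  · simp [hpx, hqp x hpx]
  · rw [mul_eq_zero_iff_left hpx, klFun_eq_zero_iff (div_nonneg (hq x) (hp x)),
      div_eq_one_iff_eq hpx]

theorem IsPMF.ne_zero (hq : IsPMF q) : q ≠ 0 := by
  rintro rfl
  simpa using hq.2

/-- The partition function (normalizing constant) `Z` of the weights `p` tilted by `exp f`. -/
noncomputable def partitionFunction (p f : X → ℝ) : ℝ :=
  ∑ x, p x * Real.exp (f x)

/-- The exponential tilting of `p` by `f`, also known as the Gibbs distribution; the paper's `p_new`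
is the case `f = r / β`. It is the zero function when `partitionFunction p f = 0`. -/
noncomputable def expTilt (p f : X → ℝ) (x : X) : ℝ :=
  p x * Real.exp (f x) / partitionFunction p f

variable {f : X → ℝ}

theorem partitionFunction_pos (hp : ∀ x, 0 ≤ p x) (hp_ne : p ≠ 0) :
    0 < partitionFunction p f := by
  obtain ⟨x, hx⟩ := Function.ne_iff.mp hp_ne
  exact sum_pos' (fun y _ => mul_nonneg (hp y) (Real.exp_nonneg _))
    ⟨x, mem_univ x, mul_pos ((hp x).lt_of_ne' hx) (Real.exp_pos _)⟩

theorem isPMF_expTilt (hp : ∀ x, 0 ≤ p x) (hp_ne : p ≠ 0) : IsPMF (expTilt p f) := by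
  have hZ : 0 < partitionFunction p f := partitionFunction_pos hp hp_ne
  refine ⟨fun x => div_nonneg (mul_nonneg (hp x) (Real.exp_nonneg _)) hZ.le, ?_⟩
  simp only [expTilt, ← sum_div]
  exact div_self hZ.ne'

theorem expTilt_eq_zero_iff (hZ : partitionFunction p f ≠ 0) {x : X} :
    expTilt p f x = 0 ↔ p x = 0 := by
  simp [expTilt, hZ]

theorem log_div_expTilt (hZ : partitionFunction p f ≠ 0) {a : ℝ} (ha : a ≠ 0) {x : X}
    (hpx : p x ≠ 0) :
    Real.log (a / expTilt p f x) =
      Real.log (a / p x) - f x + Real.log (partitionFunction p f) := by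
  have hexp : Real.exp (f x) ≠ 0 := Real.exp_ne_zero _
  rw [expTilt, Real.log_div ha (div_ne_zero (mul_ne_zero hpx hexp) hZ),
    Real.log_div (mul_ne_zero hpx hexp) hZ, Real.log_mul hpx hexp, Real.log_exp,
    Real.log_div ha hpx]
  ring

theorem KL_expTilt (hZ : partitionFunction p f ≠ 0) (hqp : ∀ x, p x = 0 → q x = 0) :
    KL q (expTilt p f) =
      KL q p - ∑ x, q x * f x + (∑ x, q x) * Real.log (partitionFunction p f) := by
  rw [KL, KL, sum_mul, ← sum_sub_distrib, ← sum_add_distrib]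
  refine sum_congr rfl fun x _ => ?_
  rcases eq_or_ne (q x) 0 with hqx | hqx
  · simp [hqx]
  · rw [log_div_expTilt hZ hqx (mt (hqp x) hqx)]
    ring

theorem sum_mul_sub_mul_KL {r : X → ℝ} {β : ℝ} (hβ : β ≠ 0)
    (hZ : partitionFunction p (fun x => r x / β) ≠ 0) (hq : ∑ x, q x = 1)
    (hqp : ∀ x, p x = 0 → q x = 0) :
    ∑ x, q x * r x - β * KL q p =
      β * (Real.log (partitionFunction p fun x => r x / β) -
        KL q (expTilt p fun x => r x / β)) := by
  have hr : ∑ x, q x * r x = β * ∑ x, q x * (r x / β) := by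
    rw [mul_sum]
    exact sum_congr rfl fun x _ => by field_simp
  rw [KL_expTilt hZ hqp, hq, hr]
  ring

theorem kl_regularized_reward_unique_maximizer_general (hp : ∀ x, 0 ≤ p x) (r : X → ℝ) {β : ℝ}
    (hβ : 0 < β) (hq : IsPMF q) (hqp : ∀ x, p x = 0 → q x = 0) :
    let pnew := expTilt p fun x => r x / β
    (∑ x, q x * r x - β * KL q p ≤ ∑ x, pnew x * r x - β * KL pnew p) ∧
    (∑ x, q x * r x - β * KL q p = ∑ x, pnew x * r x - β * KL pnew p ↔ q = pnew) := by
  intro pnew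
  have hp_ne : p ≠ 0 := fun h => hq.ne_zero (funext fun x => hqp x (congrFun h x))
  have hZ : partitionFunction p (fun x => r x / β) ≠ 0 := (partitionFunction_pos hp hp_ne).ne'
  have hnew : IsPMF pnew := isPMF_expTilt hp hp_ne
  have hqnew : ∀ x, pnew x = 0 → q x = 0 := fun x hx => hqp x ((expTilt_eq_zero_iff hZ).mp hx)
  have hsum : ∑ x, pnew x = ∑ x, q x := hnew.2.trans hq.2.symm
  have hself : KL pnew pnew = 0 := (KL_eq_zero_iff hnew.1 hnew.1 (fun _ => id) rfl).mpr rfl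
  rw [sum_mul_sub_mul_KL hβ.ne' hZ hq.2 hqp,
    sum_mul_sub_mul_KL hβ.ne' hZ hnew.2 fun x => (expTilt_eq_zero_iff hZ).mpr, hself,
    mul_le_mul_iff_right₀ hβ, mul_right_inj' hβ.ne', sub_le_sub_iff_left, sub_right_inj]
  exact ⟨KL_nonneg hnew.1 hq.1 hqnew hsum.le, KL_eq_zero_iff hnew.1 hq.1 hqnew hsum⟩

end

/-- `p_new ∝ p · exp(r/β)` is the unique maximizer of the KL-regularized expected reward
`Σ_x q(x)·r(x) − β·KL(q‖p)` over pmfs `q`. -/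
theorem kl_regularized_reward_unique_maximizer
    {X : Type*} [Fintype X] [Nonempty X]
    (p : X → ℝ) (hpmf : IsPMF p) (hp : ∀ x, 0 < p x)
    (r : X → ℝ) (β : ℝ) (hβ : 0 < β)
    (Z : ℝ) (hZ : Z = ∑ x, p x * Real.exp (r x / β))
    (pnew : X → ℝ) (hpnew : ∀ x, pnew x = p x * Real.exp (r x / β) / Z) :
    ∀ q : X → ℝ, IsPMF q →
      (∑ x, q x * r x - β * KL q p ≤ ∑ x, pnew x * r x - β * KL pnew p) ∧
      (∑ x, q x * r x - β * KL q p = ∑ x, pnew x * r x - β * KL pnew p ↔ q = pnew) := by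
  subst hZ
  obtain rfl : pnew = expTilt p fun x => r x / β := funext hpnew
  exact fun q hq => kl_regularized_reward_unique_maximizer_general (fun x => (hp x).le) r hβ hq
    fun x hx => absurd hx (hp x).ne'
end

section
/- Let X be a nonempty finite type, let p be a probability mass function on X with p(x) > 0 for every x, and let S ⊆ X with p(Sᶜ) := Σ_{x ∉ S} p(x) > 0. Let r : X → ℝ be the constraint-indicator reward, r(x) = 1 if x ∉ S and r(x) = 0 if x ∈ S. For β > 0, define Z_β := Σ_x p(x)·exp(r(x)/β) and p_β(x) := p(x)·exp(r(x)/β)/Z_β. Then for every x ∈ X, p_β(x) → 𝟙[x ∉ S]·p(x)/p(Sᶜ) as β → 0⁺; that is, the KL-regularized reward-maximizing distribution converges pointwise to the minimal targeted update of p with respect to S as the regularization strength β tends to zero. -/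
/-!
Subtracting a constant from the reward multiplies every weight `p y * exp (r y / β)` by the same
factor, so the maximal reward may be taken to be `0`. The weights then stay equal to `p` where the
reward is maximal and decay to `0` elsewhere as `β → 0⁺`; being dominated by `|p|`, they may be
summed under the limit, and the normalizing constant tends to the mass of `Sᶜ`.
-/

open scoped Classical

open Filter Real Topology

theorem tendsto_exp_div_nhdsGT_zero_of_neg {a : ℝ} (ha : a < 0) :
    Tendsto (fun β : ℝ ↦ exp (a / β)) (𝓝[>] 0) (𝓝 0) := by
  simp only [div_eq_mul_inv]
  exact tendsto_exp_atBot.comp (tendsto_inv_nhdsGT_zero.const_mul_atTop_of_neg ha)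

section

variable {X : Type*} {p r : X → ℝ} {S : Set X}

/-- The distribution `p_β ∝ p * exp (r / β)` maximizing the expectation of the reward `r` under a
KL penalty of strength `β` towards `p`. It is defined for arbitrary real weights `p`, on a possibly
infinite type. -/
noncomputable def exponentialTilt (p r : X → ℝ) (β : ℝ) (x : X) : ℝ :=
  p x * exp (r x / β) / ∑' y, p y * exp (r y / β)

/-- The minimal targeted update of `p` with respect to the negative set `S`: the weights on `S` are
set to zero and the others renormalized. -/
noncomputable def minimalTargetedUpdate (p : X → ℝ) (S : Set X) (x : X) : ℝ :=
  Sᶜ.indicator p x / ∑' y, Sᶜ.indicator p y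

theorem exponentialTilt_eq_div_sum [Fintype X] (p r : X → ℝ) (β : ℝ) (x : X) :
    exponentialTilt p r β x = p x * exp (r x / β) / ∑ y, p y * exp (r y / β) := by
  rw [exponentialTilt, tsum_fintype]

theorem tsum_indicator_compl_eq_sum_filter [Fintype X] (p : X → ℝ) (S : Set X) :
    ∑' y, Sᶜ.indicator p y = ∑ y ∈ Finset.univ.filter (fun y ↦ y ∉ S), p y := by
  simp only [tsum_fintype, Finset.sum_filter, Set.indicator_apply, Set.mem_compl_iff]

theorem minimalTargetedUpdate_eq_ite [Fintype X] (p : X → ℝ) (S : Set X) (x : X) :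
    minimalTargetedUpdate p S x =
      if x ∈ S then 0 else p x / ∑ y ∈ Finset.univ.filter (fun y ↦ y ∉ S), p y := by
  rw [minimalTargetedUpdate, tsum_indicator_compl_eq_sum_filter]
  by_cases hx : x ∈ S <;> simp [hx]

theorem exponentialTilt_sub_const (p r : X → ℝ) (c β : ℝ) :
    exponentialTilt p (fun x ↦ r x - c) β = exponentialTilt p r β := by
  have weight_sub_const (y : X) :
      p y * exp ((r y - c) / β) = p y * exp (r y / β) * exp (-(c / β)) := by
    rw [mul_assoc, ← exp_add, sub_div, sub_eq_add_neg]
  funext x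
  simp only [exponentialTilt, weight_sub_const, tsum_mul_right]
  exact mul_div_mul_right _ _ (exp_ne_zero _)

theorem tendsto_mul_exp_div_indicator (hneg : ∀ x ∈ S, r x < 0) (hzero : ∀ x ∉ S, r x = 0)
    (x : X) :
    Tendsto (fun β : ℝ ↦ p x * exp (r x / β)) (𝓝[>] 0) (𝓝 (Sᶜ.indicator p x)) := by
  by_cases hx : x ∈ S
  · simpa [hx] using (tendsto_exp_div_nhdsGT_zero_of_neg (hneg x hx)).const_mul (p x)
  · simp [hx, hzero x hx]

theorem tendsto_tsum_mul_exp_div_indicator (hp : Summable p) (hneg : ∀ x ∈ S, r x < 0)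
    (hzero : ∀ x ∉ S, r x = 0) :
    Tendsto (fun β : ℝ ↦ ∑' x, p x * exp (r x / β)) (𝓝[>] 0) (𝓝 (∑' x, Sᶜ.indicator p x)) := by
  have reward_nonpos (x : X) : r x ≤ 0 := by
    by_cases hx : x ∈ S
    exacts [(hneg x hx).le, (hzero x hx).le]
  refine tendsto_tsum_of_dominated_convergence hp.norm
    (tendsto_mul_exp_div_indicator hneg hzero) ?_
  filter_upwards [self_mem_nhdsWithin] with β (hβ : 0 < β) x
  have exp_le_one : exp (r x / β) ≤ 1 :=
    exp_le_one_iff.mpr (div_nonpos_of_nonpos_of_nonneg (reward_nonpos x) hβ.le)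
  rw [norm_mul, norm_of_nonneg (exp_pos _).le]
  exact mul_le_of_le_one_right (norm_nonneg _) exp_le_one

theorem kl_regularized_optimum_tendsto_minimal_targeted_update_general {M : ℝ}
    (hp : Summable p) (hS : ∑' x, Sᶜ.indicator p x ≠ 0)
    (hlt : ∀ x ∈ S, r x < M) (hmax : ∀ x ∉ S, r x = M) (x : X) :
    Tendsto (fun β : ℝ ↦ exponentialTilt p r β x) (𝓝[>] 0) (𝓝 (minimalTargetedUpdate p S x)) := by
  have hneg : ∀ y ∈ S, r y - M < 0 := fun y hy ↦ sub_neg.mpr (hlt y hy)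
  have hzero : ∀ y ∉ S, r y - M = 0 := fun y hy ↦ sub_eq_zero.mpr (hmax y hy)
  simp only [← exponentialTilt_sub_const p r M]
  exact (tendsto_mul_exp_div_indicator hneg hzero x).div
    (tendsto_tsum_mul_exp_div_indicator hp hneg hzero) hS

end

/-- With the constraint-indicator reward `r = 𝟙[· ∉ S]`, the KL-regularized reward-maximizing
distribution `p_β ∝ p · exp(r/β)` converges pointwise, as `β → 0⁺`, to the minimal targeted
update `𝟙[x ∉ S] · p(x) / p(Sᶜ)` of `p` with respect to `S`. -/
theorem kl_regularized_optimum_tendsto_minimal_targeted_update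
    {X : Type*} [Fintype X] [Nonempty X]
    (p : X → ℝ) (hpmf : IsPMF p) (hp : ∀ x, 0 < p x)
    (S : Set X)
    (hZ : 0 < ∑ x ∈ Finset.univ.filter (fun x => x ∉ S), p x)
    (r : X → ℝ) (hr : ∀ x, r x = if x ∈ S then 0 else 1) :
    ∀ x : X,
      Filter.Tendsto
        (fun β : ℝ => p x * Real.exp (r x / β) / ∑ y, p y * Real.exp (r y / β))
        (nhdsWithin 0 (Set.Ioi 0))
        (nhds (if x ∈ S then 0
               else p x / ∑ y ∈ Finset.univ.filter (fun y => y ∉ S), p y)) := by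
  simpa only [exponentialTilt_eq_div_sum, minimalTargetedUpdate_eq_ite] using
    kl_regularized_optimum_tendsto_minimal_targeted_update_general (M := 1)
      (hasSum_fintype p).summable ((tsum_indicator_compl_eq_sum_filter p S).trans_ne hZ.ne')
      (by simp +contextual [hr]) (by simp +contextual [hr])
end
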